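/- There is a universal constant C > 0 with the following property. Let (X, H) be a hypothesis class with X countable and with Littlestone dimension d < ∞, and let 0 < ε < 1/2. Then every complete ε-good binary tree that is shattered by H has depth at most C·d/(1/2 − ε)^2; that is, d_ε ≤ C·d/(1/2 − ε)^2, where d_ε denotes the maximum possible depth of a complete ε-good tree shattered by H. -/

import Mathlib

open scoped Classical
universe u

/-- `h` realizes the branch `y` in the binary tree with node labels given by `t`
(the node reached by the bit string `s` is labeled `t s`). -/
def Realizes {X : Type*} (t : List Bool → X) (h : X → Bool) (y : List Bool) : Prop :=
  ∀ i : Fin y.length, h (t (y.take i)) = y.get i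

/-- `H` shatters some complete binary mistake tree of depth `d`. -/
def Shatters {X : Type*} (H : Set (X → Bool)) (d : ℕ) : Prop :=
  ∃ t : List Bool → X, ∀ y : List Bool, y.length = d → ∃ h ∈ H, Realizes t h y

/-- Littlestone dimension: supremum of depths of shattered mistake trees
(`⊥` for the empty class, `⊤` if unbounded). -/
noncomputable def Ldim {X : Type*} (H : Set (X → Bool)) : WithBot ℕ∞ :=
  sSup {d : WithBot ℕ∞ | ∃ n : ℕ, Shatters H n ∧ d = ((n : ℕ∞) : WithBot ℕ∞)}

/-- The mass that distribution `D` assigns to `{x : h x = 1}`. -/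
noncomputable def hmass {X : Type*} (D : X → ℝ) (h : X → Bool) : ℝ :=
  ∑' x, if h x = true then D x else 0

/-- `D` is a probability mass function on `X`. -/
def IsPMF {X : Type*} (D : X → ℝ) : Prop :=
  (∀ x, 0 ≤ D x) ∧ (∑' x, D x) = 1

/-- `D` is an ε-good probability mass function w.r.t. `H`. -/
def GoodPMF {X : Type*} (H : Set (X → Bool)) (ε : ℝ) (D : X → ℝ) : Prop :=
  IsPMF D ∧ ∀ h ∈ H, hmass D h ≤ ε ∨ 1 - ε ≤ hmass D h

/-- `h` realizes the branch `y` of the distribution-labeled tree `𝒯`: at each node it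
goes in direction 1 iff the node's distribution gives `{x : h x = 1}` mass `≥ 1 - ε`. -/
def RealizesDist {X : Type*} (ε : ℝ) (𝒯 : List Bool → X → ℝ) (h : X → Bool)
    (y : List Bool) : Prop :=
  ∀ i : Fin y.length,
    (y.get i = true → 1 - ε ≤ hmass (𝒯 (y.take i)) h) ∧
    (y.get i = false → hmass (𝒯 (y.take i)) h ≤ ε)

/-- `𝒯` is a complete ε-good binary tree of depth `T` shattered by `H`. -/
def GoodTree {X : Type*} (H : Set (X → Bool)) (ε : ℝ) (T : ℕ)
    (𝒯 : List Bool → X → ℝ) : Prop :=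
  (∀ s : List Bool, s.length < T → GoodPMF H ε (𝒯 s)) ∧
  (∀ y : List Bool, y.length = T → ∃ h ∈ H, RealizesDist ε 𝒯 h y)


/-- Sum over all bit strings of length `n`. -/
noncomputable def bsum : ℕ → (List Bool → ℝ) → ℝ
  | 0, f => f []
  | n + 1, f => bsum n (fun y => f (false :: y)) + bsum n (fun y => f (true :: y))

lemma bsum_le (n : ℕ) : ∀ (f g : List Bool → ℝ), (∀ y, y.length = n → f y ≤ g y) →
    bsum n f ≤ bsum n g := by
  induction n with
  | zero => intro f g h; exact h [] rfl
  | succ n ih =>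
    intro f g h
    exact add_le_add (ih _ _ fun y hy => h _ (by simp [hy])) (ih _ _ fun y hy => h _ (by simp [hy]))

lemma bsum_congr (n : ℕ) (f g : List Bool → ℝ) (h : ∀ y, y.length = n → f y = g y) :
    bsum n f = bsum n g :=
  le_antisymm (bsum_le n _ _ fun y hy => (h y hy).le) (bsum_le n _ _ fun y hy => (h y hy).ge)

lemma bsum_add (n : ℕ) : ∀ (f g : List Bool → ℝ),
    bsum n (fun y => f y + g y) = bsum n f + bsum n g := by
  induction n with
  | zero => intro f g; rfl
  | succ n ih => intro f g; simp only [bsum, ih]; ring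

lemma bsum_mul (n : ℕ) (c : ℝ) : ∀ (f : List Bool → ℝ),
    bsum n (fun y => c * f y) = c * bsum n f := by
  induction n with
  | zero => intro f; rfl
  | succ n ih => intro f; simp only [bsum, ih]; ring

lemma bsum_const (n : ℕ) (c : ℝ) : bsum n (fun _ => c) = c * 2 ^ n := by
  induction n with
  | zero => simp [bsum]
  | succ n ih => simp only [bsum, ih]; ring

lemma bsum_hasSum {X : Type*} (n : ℕ) : ∀ (f : List Bool → X → ℝ) (e : List Bool → ℝ),
    (∀ y, y.length = n → HasSum (f y) (e y)) →
    HasSum (fun x => bsum n (fun y => f y x)) (bsum n e) := by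
  induction n with
  | zero => intro f e h; exact h [] rfl
  | succ n ih =>
    intro f e h
    exact (ih _ _ fun y hy => h _ (by simp [hy])).add (ih _ _ fun y hy => h _ (by simp [hy]))

/-! Littlestone dimension splitting -/

lemma realizes_cons {X : Type*} (t : List Bool → X) (h : X → Bool) (b : Bool) (y : List Bool) :
    Realizes t h (b :: y) ↔ h (t []) = b ∧ Realizes (fun s => t (b :: s)) h y := by
  unfold Realizes
  constructor
  · intro H
    refine ⟨H ⟨0, by simp⟩, fun i => ?_⟩
    have := H ⟨i.1 + 1, by simp⟩
    simpa using this
  · rintro ⟨h0, h1⟩ ⟨i, hi⟩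
    cases i with
    | zero => simpa using h0
    | succ i =>
      have := h1 ⟨i, by simpa using hi⟩
      simpa using this

lemma shatters_split {X : Type*} (V : Set (X → Bool)) (x : X) (n : ℕ)
    (h0 : Shatters (V ∩ {h | h x = false}) n) (h1 : Shatters (V ∩ {h | h x = true}) n) :
    Shatters V (n + 1) := by
  obtain ⟨t0, h0⟩ := h0
  obtain ⟨t1, h1⟩ := h1
  refine ⟨fun s => match s with
    | [] => x
    | false :: s => t0 s
    | true :: s => t1 s, ?_⟩
  intro y hy
  match y, hy with
  | false :: y, hy =>
    obtain ⟨h, hV, hr⟩ := h0 y (by simpa using hy)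
    exact ⟨h, hV.1, (realizes_cons _ _ _ _).2 ⟨hV.2, hr⟩⟩
  | true :: y, hy =>
    obtain ⟨h, hV, hr⟩ := h1 y (by simpa using hy)
    exact ⟨h, hV.1, (realizes_cons _ _ _ _).2 ⟨hV.2, hr⟩⟩

lemma shatters_mono {X : Type*} {V W : Set (X → Bool)} (hVW : V ⊆ W) {n : ℕ}
    (h : Shatters V n) : Shatters W n := by
  obtain ⟨t, h⟩ := h
  refine ⟨t, fun y hy => ?_⟩
  obtain ⟨g, hg, hr⟩ := h y hy
  exact ⟨g, hVW hg, hr⟩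

lemma empty_of_not_shatters {X : Type*} [Nonempty X] {V : Set (X → Bool)}
    (h : ¬ Shatters V 0) : V = ∅ := by
  by_contra hne
  obtain ⟨g, hg⟩ := Set.nonempty_iff_ne_empty.2 hne
  refine h ⟨fun _ => Classical.arbitrary X, fun y hy => ⟨g, hg, ?_⟩⟩
  intro i
  exact absurd i.2 (by omega)

/-- Potential. -/
noncomputable def pot (q : ℝ) : ℕ → ℕ → ℝ
  | 0, _ => 0
  | n + 1, m => (1 + q) ^ m * q⁻¹ ^ n

lemma pot_nonneg (q : ℝ) (hq : 0 < q) (n m : ℕ) : 0 ≤ pot q n m := by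
  cases n with
  | zero => exact le_rfl
  | succ n => unfold pot; positivity

lemma pot_step (q : ℝ) (hq : 0 < q) (n m : ℕ) :
    pot q (n + 1) m + pot q n m ≤ pot q (n + 1) (m + 1) := by
  cases n with
  | zero =>
    simp only [pot, pow_zero, mul_one, add_zero]
    rw [pow_succ]
    have : 0 < (1 + q) ^ m := by positivity
    nlinarith
  | succ n =>
    simp only [pot]
    have hqq : q * q⁻¹ = 1 := mul_inv_cancel₀ hq.ne'
    apply le_of_eq
    linear_combination (-(q⁻¹ ^ n * (1 + q) ^ m)) * hqq

lemma inner_split {X : Type*} (q : ℝ) (hq : 0 < q) [Nonempty X] (G : Set (X → Bool) → ℝ) (B : ℝ)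
    (hB : 0 ≤ B) (hG0 : G ∅ ≤ 0)
    (hadd : ∀ V x, G V ≤ G (V ∩ {h | h x = false}) + G (V ∩ {h | h x = true})) (m : ℕ)
    (l : List X) : ∀ (V : Set (X → Bool)) (n : ℕ), ¬ Shatters V n →
      (∀ V' ⊆ V, ∀ n', ¬ Shatters V' n' → (∀ x ∈ l, ∀ h ∈ V', ∀ h' ∈ V', h x = h' x) →
        G V' ≤ B * pot q n' m) → G V ≤ B * pot q n (m + l.length) := by
  induction l with
  | nil =>
    intro V n hn H
    exact H V subset_rfl n hn (by simp)
  | cons x l ih =>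
    intro V n hn H
    cases n with
    | zero =>
      rw [empty_of_not_shatters hn]
      simpa [pot] using hG0
    | succ n =>
      have key : ∀ b n', ¬ Shatters (V ∩ {h | h x = b}) n' →
          G (V ∩ {h | h x = b}) ≤ B * pot q n' (m + l.length) := by
        intro b n' hn'
        refine ih _ _ hn' fun V' hV' n'' hn'' hag =>
          H V' (hV'.trans Set.inter_subset_left) n'' hn'' ?_
        intro z hz h hh h' hh'
        rcases List.mem_cons.1 hz with rfl | hz
        · exact (hV' hh).2.trans (hV' hh').2.symm
        · exact hag z hz h hh h' hh'
      have hmono : ∀ b, ¬ Shatters (V ∩ {h | h x = b}) (n + 1) :=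
        fun b hs => hn (shatters_mono Set.inter_subset_left hs)
      have hstep := mul_le_mul_of_nonneg_left (pot_step q hq n (m + l.length)) hB
      rw [mul_add] at hstep
      have e : m + (x :: l).length = m + l.length + 1 := by simp [add_assoc]
      rw [e]
      have ha := hadd V x
      by_cases h0 : Shatters (V ∩ {h | h x = false}) n
      · have h1 : ¬ Shatters (V ∩ {h | h x = true}) n := fun h1 => hn (shatters_split V x n h0 h1)
        have := key true _ h1
        have := key false _ (hmono false)
        linarith
      · have := key false _ h0
        have := key true _ (hmono true)
        linarith

/-- Majority vote of `h` on the list. -/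
def majv {X : Type*} (h : X → Bool) (l : List X) : Bool :=
  decide (l.length < 2 * l.countP h)

lemma majv_congr {X : Type*} (h h' : X → Bool) (l : List X) (hh : ∀ x ∈ l, h x = h' x) :
    majv h l = majv h' l := by
  unfold majv
  rw [List.countP_congr (q := h')]
  intro x hx
  rw [hh x hx]

/-- Indicator of a mistake. -/
noncomputable def wr (a b : Bool) : ℝ := if a = b then 0 else 1

/-- Number of majority mistakes of `h` along branch `y`. -/
noncomputable def mist {X : Type*} : (List Bool → List X) → (X → Bool) → List Bool → ℝ
  | _, _, [] => 0
  | L, h, b :: y => wr (majv h (L [])) b + mist (fun s => L (b :: s)) h y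

lemma upper {X : Type*} [Nonempty X] (q : ℝ) (hq : 0 < q) (hq1 : q ≤ 1) (k T : ℕ) :
    ∀ (L : List Bool → List X) (_ : ∀ s, (L s).length = k) (V : Set (X → Bool)) (n : ℕ)
      (_ : ¬ Shatters V n) (h : List Bool → X → Bool),
      bsum T (fun y => if h y ∈ V then Real.exp (- mist L (h y) y) else 0)
        ≤ (1 + Real.exp (-1)) ^ T * pot q n (k * T) := by
  induction T with
  | zero =>
    intro L hL V n hn h
    cases n with
    | zero =>
      rw [empty_of_not_shatters hn]
      simp [bsum, pot]
    | succ n =>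
      have hq2 : 1 ≤ q⁻¹ ^ n := one_le_pow₀ ((one_le_inv₀ hq).2 hq1)
      have : mist L (h []) [] = 0 := rfl
      simp only [bsum, pot, this]
      split_ifs
      · simpa using hq2
      · simp; positivity
  | succ T ih =>
    intro L hL V n hn h
    have := inner_split q hq
      (fun V => bsum (T + 1) (fun y => if h y ∈ V then Real.exp (- mist L (h y) y) else 0))
      ((1 + Real.exp (-1)) ^ (T + 1)) (by positivity) (by simp [bsum_const])
      (by
        intro V x
        rw [← bsum_add]
        refine bsum_le _ _ _ fun y _ => ?_
        by_cases h1 : h y ∈ V <;> cases h2 : h y x <;> simp [h1, h2])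
      (k * T) (L []) V n hn ?_
    · rw [hL] at this
      simpa [mul_add] using this
    · intro V' hV' n' hn' hag
      rcases V'.eq_empty_or_nonempty with rfl | ⟨g, hg⟩
      · have : 0 ≤ pot q n' (k * T) := pot_nonneg q hq _ _
        simp only [Set.mem_empty_iff_false, if_false, bsum_const, zero_mul]
        positivity
      · have hm : ∀ f ∈ V', majv f (L []) = majv g (L []) := fun f hf =>
          majv_congr _ _ _ fun x hx => hag x hx f hf g hg
        have key : ∀ b, bsum T (fun y => if h (b :: y) ∈ V' then
            Real.exp (- mist L (h (b :: y)) (b :: y)) else 0) ≤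
            Real.exp (-(wr (majv g (L [])) b)) *
              ((1 + Real.exp (-1)) ^ T * pot q n' (k * T)) := by
          intro b
          refine le_trans (le_of_eq ?_) (mul_le_mul_of_nonneg_left
            (ih (fun s => L (b :: s)) (fun s => hL _) V' n' hn' (fun y => h (b :: y)))
            (Real.exp_pos _).le)
          rw [← bsum_mul]
          refine bsum_congr _ _ _ fun y _ => ?_
          by_cases hy : h (b :: y) ∈ V'
          · simp only [hy, if_true, mist, hm _ hy]
            rw [← Real.exp_add]
            congr 1
            ring
          · simp [hy]
        simp only [bsum]
        refine (add_le_add (key false) (key true)).trans (le_of_eq ?_)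
        cases majv g (L []) <;> simp [wr, pow_succ] <;> ring

/-! Choosing points -/

lemma hasSum_right {X : Type*} (D : X → ℝ) (hD : IsPMF D) (h : X → Bool) (c : Bool) (ε : ℝ)
    (h1 : c = true → 1 - ε ≤ hmass D h) (h0 : c = false → hmass D h ≤ ε) :
    ∃ p, HasSum (fun x => if h x = c then D x else 0) p ∧ 1 - ε ≤ p := by
  have hs : HasSum D 1 := by
    have : Summable D := by
      by_contra hn
      have := hD.2
      rw [tsum_eq_zero_of_not_summable hn] at this
      norm_num at this
    rw [← hD.2]; exact this.hasSum
  have ht : HasSum (fun x => if h x = true then D x else 0) (hmass D h) := by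
    apply Summable.hasSum
    refine Summable.of_nonneg_of_le (fun x => ?_) (fun x => ?_) hs.summable
    · have := hD.1 x
      split_ifs <;> simp [this]
    · have := hD.1 x
      split_ifs <;> simp [this]
  cases c with
  | true => exact ⟨_, ht, h1 rfl⟩
  | false =>
    refine ⟨1 - hmass D h, ?_, by linarith [h0 rfl]⟩
    have hfun : (fun x => if h x = false then D x else 0) =
        fun x => D x - (if h x = true then D x else 0) := by
      funext x
      cases h x <;> simp
    rw [hfun]
    exact hs.sub ht

lemma exists_point {X : Type*} (D : X → ℝ) (hD : IsPMF D) (n : ℕ) (h : List Bool → X → Bool)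
    (c : List Bool → Bool) (ε b : ℝ) (hb : 1 < b)
    (hp : ∀ z, z.length = n → (c z = true → 1 - ε ≤ hmass D (h z)) ∧
      (c z = false → hmass D (h z) ≤ ε)) (w : List Bool → ℝ) (hw : ∀ z, 0 ≤ w z) :
    ∃ x, bsum n (fun z => w z * (if h z x = c z then b⁻¹ else b)) ≤
      (ε * b + (1 - ε) * b⁻¹) * bsum n w := by
  by_contra hcon
  push Not at hcon
  set r := ε * b + (1 - ε) * b⁻¹ with hr
  have hs : HasSum D 1 := by
    have : Summable D := by
      by_contra hn
      have := hD.2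
      rw [tsum_eq_zero_of_not_summable hn] at this
      norm_num at this
    rw [← hD.2]; exact this.hasSum
  have hbi : b⁻¹ < b := by
    have : b⁻¹ < 1 := inv_lt_one_of_one_lt₀ hb
    linarith
  have hex : ∀ z, ∃ e, z.length = n →
      HasSum (fun x => D x * (w z * (if h z x = c z then b⁻¹ else b))) e ∧ e ≤ r * w z := by
    intro z
    by_cases hz : z.length = n
    · obtain ⟨p, hp1, hp2⟩ := hasSum_right D hD (h z) (c z) ε (hp z hz).1 (hp z hz).2
      refine ⟨w z * (b * 1 + (b⁻¹ - b) * p), fun _ => ⟨?_, ?_⟩⟩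
      · have hfun : (fun x => D x * (w z * (if h z x = c z then b⁻¹ else b))) =
            fun x => w z * (b * D x + (b⁻¹ - b) * (if h z x = c z then D x else 0)) := by
          funext x
          split_ifs <;> ring
        rw [hfun]
        exact ((hs.mul_left b).add (hp1.mul_left (b⁻¹ - b))).mul_left (w z)
      · have h2 : b * 1 + (b⁻¹ - b) * p ≤ r := by
          rw [hr]; nlinarith
        nlinarith [hw z]
    · exact ⟨0, fun h => absurd h hz⟩
  choose e he using hex
  have hsum := bsum_hasSum n _ e fun z hz => (he z hz).1
  have hle : bsum n e ≤ r * bsum n w := by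
    rw [← bsum_mul]
    exact bsum_le _ _ _ fun z hz => (he z hz).2
  simp only [bsum_mul] at hsum
  have hlow := hs.mul_right (r * bsum n w)
  rw [one_mul] at hlow
  have hpos : ∃ x, 0 < D x := by
    by_contra hno
    push Not at hno
    have : D = fun _ => 0 := funext fun x => le_antisymm (hno x) (hD.1 x)
    have h2 := hD.2
    rw [this] at h2
    simp at h2
  obtain ⟨x0, hx0⟩ := hpos
  have : r * bsum n w < bsum n e :=
    hasSum_lt (i := x0) (fun x => mul_le_mul_of_nonneg_left (hcon x).le (hD.1 x))
      (mul_lt_mul_of_pos_left (hcon x0) hx0) hlow hsum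
  linarith

lemma exists_list {X : Type*} (D : X → ℝ) (hD : IsPMF D) (n : ℕ) (h : List Bool → X → Bool)
    (c : List Bool → Bool) (ε b : ℝ) (hb : 1 < b) (hr : 0 ≤ ε * b + (1 - ε) * b⁻¹)
    (hp : ∀ z, z.length = n → (c z = true → 1 - ε ≤ hmass D (h z)) ∧
      (c z = false → hmass D (h z) ≤ ε)) (k : ℕ) :
    ∃ l : List X, l.length = k ∧
      bsum n (fun z => (l.map (fun x => if h z x = c z then b⁻¹ else b)).prod) ≤
      (ε * b + (1 - ε) * b⁻¹) ^ k * 2 ^ n := by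
  induction k with
  | zero => exact ⟨[], rfl, by simp [bsum_const]⟩
  | succ k ih =>
    obtain ⟨l, hl, hle⟩ := ih
    obtain ⟨x, hx⟩ := exists_point D hD n h c ε b hb hp
      (fun z => (l.map (fun x => if h z x = c z then b⁻¹ else b)).prod) (by
        intro z
        apply List.prod_nonneg
        intro a ha
        obtain ⟨x, -, rfl⟩ := List.mem_map.1 ha
        have : 0 < b := by linarith
        split_ifs <;> positivity)
    refine ⟨x :: l, by simp [hl], ?_⟩
    calc _ = _ := bsum_congr _ _ _ fun z _ => by
            rw [List.map_cons, List.prod_cons, mul_comm]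
      _ ≤ _ := hx
      _ ≤ _ := mul_le_mul_of_nonneg_left hle hr
      _ = _ := by ring

lemma prod_eq {X : Type*} (h : X → Bool) (c : Bool) (b : ℝ) (hb : 1 < b) (l : List X) :
    (l.map (fun x => if h x = c then b⁻¹ else b)).prod * b ^ (l.countP (fun x => h x == c)) =
      b ^ (l.countP (fun x => !(h x == c))) := by
  have : b ≠ 0 := by linarith
  induction l with
  | nil => simp
  | cons x l ih =>
    by_cases hx : h x = c
    · simp only [List.map_cons, List.prod_cons, hx, if_true, beq_self_eq_true, List.countP_cons,
        Bool.not_true, pow_succ, Bool.false_eq_true, if_false, add_zero, ← ih]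
      field_simp
    · have hx' : (h x == c) = false := by simpa using hx
      simp only [List.map_cons, List.prod_cons, hx, hx', if_false, List.countP_cons,
        Bool.not_false, if_true, pow_succ, Bool.false_eq_true, add_zero, ← ih]
      ring

lemma wrong_le {X : Type*} (h : X → Bool) (c : Bool) (b : ℝ) (hb : 1 < b) (l : List X) :
    wr (majv h l) c ≤ (l.map (fun x => if h x = c then b⁻¹ else b)).prod := by
  have hb0 : 0 < b := by linarith
  have he := prod_eq h c b hb l
  unfold wr
  split_ifs with hm
  · apply List.prod_nonneg
    intro a ha
    obtain ⟨x, -, rfl⟩ := List.mem_map.1 ha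
    split_ifs <;> positivity
  · have hlen := List.length_eq_countP_add_countP (fun x => h x == c) (l := l)
    have hle : l.countP (fun x => h x == c) ≤ l.countP (fun x => !(h x == c)) := by
      unfold majv at hm
      cases c with
      | true =>
        simp at hm hlen ⊢
        have : l.countP (fun x => h x) = l.countP h := rfl
        omega
      | false =>
        simp at hm hlen ⊢
        have : l.countP (fun x => h x) = l.countP h := rfl
        omega
    have := pow_le_pow_right₀ hb.le hle
    rw [← he] at this
    exact le_of_mul_le_mul_right (by simpa using this)
      (pow_pos hb0 (l.countP (fun x => h x == c)))

lemma mist_sum {X : Type*} (δ : ℝ) (T : ℕ) : ∀ (L : List Bool → List X)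
    (h : List Bool → X → Bool),
    (∀ s m, s.length + (m + 1) = T → bsum (m + 1) (fun z =>
      wr (majv (h (s ++ z)) (L s)) z.headI) ≤ δ * 2 ^ (m + 1)) →
    bsum T (fun y => mist L (h y) y) ≤ δ * T * 2 ^ T := by
  induction T with
  | zero => intro L h H; simp [bsum, mist]
  | succ T ih =>
    intro L h H
    have h0 := H [] T (by simp)
    have hb : ∀ b, bsum T (fun y => mist (fun s => L (b :: s)) (h (b :: y)) y) ≤ δ * T * 2 ^ T := by
      intro b
      refine ih (fun s => L (b :: s)) (fun y => h (b :: y)) ?_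
      intro s m hs
      have := H (b :: s) m (by simp; omega)
      simpa using this
    simp only [bsum, List.nil_append, List.headI_cons] at h0
    simp only [bsum, mist, bsum_add]
    have h1 := hb false
    have h2 := hb true
    rw [pow_succ] at h0 ⊢
    push_cast
    linarith

lemma jensen {n : ℕ} (f : List Bool → ℝ) (m : ℝ) (hf : bsum n f ≤ m * 2 ^ n) :
    Real.exp (-m) * 2 ^ n ≤ bsum n (fun y => Real.exp (- f y)) := by
  have h1 : bsum n (fun y => Real.exp (-m) * ((1 + m) + (-1) * f y)) ≤
      bsum n (fun y => Real.exp (- f y)) := by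
    refine bsum_le _ _ _ fun y _ => ?_
    have : Real.exp (- f y) = Real.exp (-m) * Real.exp (m - f y) := by
      rw [← Real.exp_add]; congr 1; ring
    rw [this]
    refine mul_le_mul_of_nonneg_left ?_ (Real.exp_pos _).le
    linarith [Real.add_one_le_exp (m - f y)]
  rw [bsum_mul, bsum_add, bsum_mul, bsum_const] at h1
  refine le_trans (mul_le_mul_of_nonneg_left ?_ (Real.exp_pos _).le) h1
  linarith

lemma numeric : (1 + Real.exp (-1)) * Real.exp (1/4) ≤ 2 := by
  have h1 := Real.exp_one_gt_d9
  have h2 := Real.exp_one_lt_d9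
  have h3 : Real.exp (-1) ≤ 0.38 := by
    rw [Real.exp_neg]
    rw [inv_le_comm₀ (by positivity) (by norm_num)]
    norm_num; linarith
  have h4 : Real.exp (1/4) ≤ 1.3 := by
    have : Real.exp (1/4) ^ 4 = Real.exp 1 := by
      rw [← Real.exp_nat_mul]; norm_num
    by_contra hc
    push Not at hc
    have := pow_lt_pow_left₀ hc (by norm_num) (n := 4) (by norm_num)
    norm_num at this
    linarith
  nlinarith [Real.exp_pos (-1), Real.exp_pos (1/4)]

lemma main_bound {X : Type*} [Nonempty X] (H : Set (X → Bool)) (d : ℕ)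
    (hd : ¬ Shatters H (d + 1)) (ε : ℝ) (h0 : 0 < ε) (h1 : ε < 1/2) (T : ℕ)
    (𝒯 : List Bool → X → ℝ) (hT : GoodTree H ε T 𝒯) :
    (T : ℝ) ≤ 1024 * d / (1/2 - ε) ^ 2 := by
  obtain ⟨γ, hγ⟩ : ∃ γ, γ = 1/2 - ε := ⟨_, rfl⟩
  have hγ0 : 0 < γ := by linarith
  have hγ1 : γ < 1/2 := by linarith
  obtain ⟨k, hk⟩ : ∃ k, k = ⌈3 / γ ^ 2⌉₊ := ⟨_, rfl⟩
  have hk1 : 3 / γ ^ 2 ≤ k := hk ▸ Nat.le_ceil _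
  have hk2 : (k : ℝ) ≤ 4 / γ ^ 2 := by
    have := Nat.ceil_lt_add_one (a := 3 / γ ^ 2) (by positivity)
    rw [← hk] at this
    have h4 : 1 ≤ 1 / γ ^ 2 := by
      rw [le_div_iff₀ (by positivity)]; nlinarith
    have : 4 / γ ^ 2 = 3 / γ ^ 2 + 1 / γ ^ 2 := by ring
    linarith
  have hkpos : (0 : ℝ) < k := lt_of_lt_of_le (by positivity) hk1
  -- rate
  have hr0 : 0 ≤ ε * (1 + γ) + (1 - ε) * (1 + γ)⁻¹ := by
    have : 0 < 1 - ε := by linarith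
    positivity
  have hr : (ε * (1 + γ) + (1 - ε) * (1 + γ)⁻¹) ^ k ≤ 1 / 8 := by
    have ha : ε * (1 + γ) + (1 - ε) * (1 + γ)⁻¹ ≤ 1 - γ ^ 2 := by
      have he : ε = 1/2 - γ := by linarith
      subst he
      have hp : 0 < 1 + γ := by linarith
      rw [← div_eq_mul_inv, ← le_sub_iff_add_le', div_le_iff₀ hp]
      nlinarith [sq_nonneg γ]
    have hb : 1 - γ ^ 2 ≤ Real.exp (-γ ^ 2) := by linarith [Real.add_one_le_exp (-γ ^ 2)]
    calc _ ≤ (Real.exp (-γ ^ 2)) ^ k := pow_le_pow_left₀ hr0 (ha.trans hb) k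
      _ = Real.exp (k * (-γ ^ 2)) := by rw [← Real.exp_nat_mul]
      _ ≤ Real.exp (-3) := by
          apply Real.exp_le_exp.2
          rw [div_le_iff₀ (by positivity)] at hk1
          linarith
      _ ≤ 1 / 8 := by
          rw [Real.exp_neg, one_div]
          apply inv_anti₀ (by norm_num)
          have h3 : Real.exp 3 = Real.exp 1 ^ 3 := by
            rw [← Real.exp_nat_mul]; norm_num
          rw [h3]
          have := pow_le_pow_left₀ (by norm_num) (show (2:ℝ) ≤ Real.exp 1 by
            linarith [Real.exp_one_gt_d9]) 3
          norm_num at this ⊢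
          linarith
  -- hypotheses
  have hex : ∀ y : List Bool, ∃ h : X → Bool, y.length = T → h ∈ H ∧ RealizesDist ε 𝒯 h y := by
    intro y
    by_cases hy : y.length = T
    · obtain ⟨h, hh⟩ := hT.2 y hy
      exact ⟨h, fun _ => hh⟩
    · exact ⟨fun _ => true, fun h => absurd h hy⟩
  choose h hh using hex
  have hL : ∀ s : List Bool, ∃ l : List X, l.length = k ∧ ∀ m, s.length + (m + 1) = T →
      bsum (m + 1) (fun z => wr (majv (h (s ++ z)) l) z.headI)
        ≤ 1 / 8 * 2 ^ (m + 1) := by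
    intro s
    by_cases hs : s.length < T
    · obtain ⟨m, hm⟩ : ∃ m, s.length + (m + 1) = T := ⟨T - s.length - 1, by omega⟩
      obtain ⟨l, hl, hle⟩ := exists_list (𝒯 s) (hT.1 s hs).1 (m + 1) (fun z => h (s ++ z))
        (fun z => z.headI) ε (1 + γ) (by linarith) hr0 (by
          intro z hz
          match z, hz with
          | a :: z, hz =>
            have hz' : z.length = m := by simpa using hz
            have := (hh (s ++ a :: z) (by simp; omega)).2 ⟨s.length, by simp⟩
            simpa using this) k
      refine ⟨l, hl, fun m' hm' => ?_⟩
      obtain rfl : m' = m := by omega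
      refine le_trans (bsum_le _ _ _ fun z _ => ?_) (hle.trans
        (mul_le_mul_of_nonneg_right hr (by positivity)))
      exact wrong_le (h (s ++ z)) z.headI (1 + γ) (by linarith) l
    · exact ⟨List.replicate k (Classical.arbitrary X), by simp, fun m hm => by omega⟩
  choose L hLlen hLb using hL
  have hmist := mist_sum (1/8) T L h hLb
  have hlow := jensen _ _ hmist
  obtain ⟨q, hq⟩ : ∃ q : ℝ, q = 1 / (16 * k) := ⟨_, rfl⟩
  have hq0 : 0 < q := by rw [hq]; positivity
  have hq1 : q ≤ 1 := by
    have : (1 : ℝ) ≤ k := by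
      have : 0 < k := by exact_mod_cast hkpos
      exact_mod_cast this
    rw [hq, div_le_one (by positivity)]
    linarith
  have hup := upper q hq0 hq1 k T L hLlen H (d + 1) hd h
  have heq : bsum T (fun y => if h y ∈ H then Real.exp (- mist L (h y) y) else 0) =
      bsum T (fun y => Real.exp (- mist L (h y) y)) :=
    bsum_congr _ _ _ fun y hy => by simp [(hh y hy).1]
  rw [heq] at hup
  have hall := hlow.trans hup
  simp only [pot] at hall
  -- upper estimates
  have hu1 : (1 + q) ^ (k * T) ≤ Real.exp (T / 16) := by
    calc (1 + q) ^ (k * T) ≤ (Real.exp q) ^ (k * T) :=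
          pow_le_pow_left₀ (by positivity) (by linarith [Real.add_one_le_exp q]) _
      _ = Real.exp (T / 16) := by
          rw [← Real.exp_nat_mul, hq]
          congr 1
          push_cast
          field_simp
  have hu2 : q⁻¹ ^ d ≤ Real.exp (16 * k * d) := by
    have : q⁻¹ ≤ Real.exp (16 * k) := by
      rw [hq, one_div, inv_inv]
      linarith [Real.add_one_le_exp (16 * (k:ℝ))]
    calc q⁻¹ ^ d ≤ (Real.exp (16 * k)) ^ d := pow_le_pow_left₀ (by positivity) this _
      _ = _ := by rw [← Real.exp_nat_mul]; congr 1; ring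
  have hnum : ((1 + Real.exp (-1))) ^ T * Real.exp (T / 4) ≤ 2 ^ T := by
    have := pow_le_pow_left₀ (by positivity) numeric T
    have e : (T : ℝ) * (1/4) = T / 4 := by ring
    rw [mul_pow, ← Real.exp_nat_mul, e] at this
    exact this
  have hA : 0 < (1 + Real.exp (-1)) ^ T := by positivity
  have hfin : Real.exp (-(1/8 * T) + T/4) ≤ Real.exp (T/16 + 16 * k * d) := by
    refine le_of_mul_le_mul_left ?_ hA
    calc (1 + Real.exp (-1)) ^ T * Real.exp (-(1/8 * T) + T/4)
        = Real.exp (-(1/8 * T)) * ((1 + Real.exp (-1)) ^ T * Real.exp (T/4)) := by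
          rw [Real.exp_add]; ring
      _ ≤ Real.exp (-(1/8 * T)) * 2 ^ T := mul_le_mul_of_nonneg_left hnum (Real.exp_pos _).le
      _ ≤ _ := hall
      _ ≤ _ := by
          rw [Real.exp_add]
          gcongr
  rw [Real.exp_le_exp] at hfin
  have hd0 : (0:ℝ) ≤ d := Nat.cast_nonneg d
  have : (T : ℝ) ≤ 256 * k * d := by linarith
  rw [← hγ]
  calc (T : ℝ) ≤ 256 * k * d := this
    _ ≤ 256 * (4 / γ ^ 2) * d := by gcongr
    _ = 1024 * d / γ ^ 2 := by ring

/-- there is a universal constant `C > 0` such that for every countable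
hypothesis class with `Ldim(H) = d < ∞` and every `0 < ε < 1/2`, every complete ε-good
binary tree shattered by `H` has depth at most `C·d/(1/2 - ε)^2`. -/
theorem stmt_8 :
    ∃ C : ℝ, 0 < C ∧
      ∀ (X : Type u) [Countable X] (H : Set (X → Bool)) (d : ℕ),
        Ldim H = ((d : ℕ∞) : WithBot ℕ∞) →
        ∀ ε : ℝ, 0 < ε → ε < 1/2 →
          ∀ (T : ℕ) (𝒯 : List Bool → X → ℝ), GoodTree H ε T 𝒯 →
            (T : ℝ) ≤ C * d / (1/2 - ε) ^ 2 := by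
  refine ⟨1024, by norm_num, ?_⟩
  intro X _ H d hd ε h0 h1 T 𝒯 hT
  have hns : ¬ Shatters H (d + 1) := by
    intro hs
    have : (((d + 1 : ℕ) : ℕ∞) : WithBot ℕ∞) ≤ Ldim H := le_sSup ⟨d + 1, hs, rfl⟩
    rw [hd, WithBot.coe_le_coe, Nat.cast_le] at this
    omega
  rcases isEmpty_or_nonempty X with hX | hX
  · rcases Nat.eq_zero_or_pos T with rfl | hpos
    · simp only [Nat.cast_zero]
      positivity
    · have := (hT.1 [] (by simpa using hpos)).1.2
      simp at this
  · exact main_bound H d hns ε h0 h1 T 𝒯 hT
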